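/- Under the stated hypotheses, if σ and Σ are subordinated with sup σ < inf Σ, then the spectrum of B = A + V does not intersect the open interval (sup σ, inf Σ); i.e. (sup σ, inf Σ) is contained in the resolvent set of B. -/

import Mathlib

/-- `E` is the projection-valued spectral measure of the bounded self-adjoint operator `T`
on the complex Hilbert space `H`: each `E Δ` (for Borel `Δ ⊆ ℝ`) is an orthogonal
projection, `E` is multiplicative and countably additive (in the strong sense), `E ℝ = 1`,
each `E Δ` commutes with `T`, and on the range of `E Δ` the operator `T` has its
approximate point spectrum inside the closure of `Δ` (which uniquely characterizes the
spectral measure of `T`). -/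
structure IsSpectralMeasure {H : Type*} [NormedAddCommGroup H] [InnerProductSpace ℂ H]
    [CompleteSpace H] (T : H →L[ℂ] H) (E : Set ℝ → H →L[ℂ] H) : Prop where
  isSelfAdjoint : ∀ Δ : Set ℝ, MeasurableSet Δ → IsSelfAdjoint (E Δ)
  map_inter : ∀ Δ₁ Δ₂ : Set ℝ, MeasurableSet Δ₁ → MeasurableSet Δ₂ →
    E Δ₁ * E Δ₂ = E (Δ₁ ∩ Δ₂)
  map_univ : E Set.univ = 1
  countably_additive : ∀ Δ : ℕ → Set ℝ, (∀ n, MeasurableSet (Δ n)) →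
    Pairwise (Function.onFun Disjoint Δ) →
    ∀ x : H, HasSum (fun n => E (Δ n) x) (E (⋃ n, Δ n) x)
  commutes : ∀ Δ : Set ℝ, MeasurableSet Δ → Commute T (E Δ)
  spectrum_loc : ∀ Δ : Set ℝ, MeasurableSet Δ → ∀ x : H, E Δ x = x →
    ∀ μ : ℝ, Metric.infDist μ Δ * ‖x‖ ≤ ‖T x - (μ : ℂ) • x‖

open scoped InnerProductSpace

section SelfAdjoint

variable {H : Type*} [NormedAddCommGroup H] [InnerProductSpace ℂ H]

lemma algebraMap_real_apply_eq_smul (μ : ℝ) (x : H) :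
    algebraMap ℝ (H →L[ℂ] H) μ x = (μ : ℂ) • x := by
  rw [Algebra.algebraMap_eq_smul_one, smul_apply, one_apply_eq_self, Complex.coe_smul]

lemma re_inner_ofReal_smul_self (r : ℝ) (x : H) :
    RCLike.re ⟪(r : ℂ) • x, x⟫_ℂ = r * ‖x‖ ^ 2 := by
  rw [inner_smul_left, Complex.conj_ofReal, RCLike.re_eq_complex_re, Complex.re_ofReal_mul,
    ← RCLike.re_eq_complex_re, inner_self_eq_norm_sq]

/-- A real number outside the spectrum of `T` makes `T - μ` bounded below. -/
lemma exists_bounded_below_of_notMem_spectrum {T : H →L[ℂ] H} {μ : ℝ} (h : μ ∉ spectrum ℝ T) :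
    ∃ δ > 0, ∀ x, δ * ‖x‖ ≤ ‖T x - (μ : ℂ) • x‖ := by
  obtain ⟨u, hu⟩ := spectrum.notMem_iff.mp h
  refine ⟨(‖(↑u⁻¹ : H →L[ℂ] H)‖ + 1)⁻¹, by positivity, fun x => ?_⟩
  have hx : (↑u⁻¹ : H →L[ℂ] H) ((u : H →L[ℂ] H) x) = x := by
    rw [← mul_apply_eq_comp, Units.inv_mul, one_apply_eq_self]
  have hux : ‖(u : H →L[ℂ] H) x‖ = ‖T x - (μ : ℂ) • x‖ := by
    rw [hu, sub_apply, algebraMap_real_apply_eq_smul, norm_sub_rev]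
  rw [inv_mul_le_iff₀ (by positivity), ← hux]
  calc ‖x‖ = ‖(↑u⁻¹ : H →L[ℂ] H) ((u : H →L[ℂ] H) x)‖ := by rw [hx]
    _ ≤ ‖(↑u⁻¹ : H →L[ℂ] H)‖ * ‖(u : H →L[ℂ] H) x‖ := ContinuousLinearMap.le_opNorm _ _
    _ ≤ _ := by gcongr; linarith

variable [CompleteSpace H]

/-- A self-adjoint operator which is bounded below is invertible. -/
lemma IsSelfAdjoint.isUnit_of_bounded_below {T : H →L[ℂ] H} (hT : IsSelfAdjoint T) {δ : ℝ}
    (hδ : 0 < δ) (h : ∀ x, δ * ‖x‖ ≤ ‖T x‖) : IsUnit T := by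
  rw [ContinuousLinearMap.isUnit_iff_bijective,
    ContinuousLinearMap.bijective_iff_dense_range_and_antilipschitz]
  constructor
  · rw [Submodule.topologicalClosure_eq_top_iff, ContinuousLinearMap.orthogonal_range,
      hT.adjoint_eq, Submodule.eq_bot_iff]
    intro x hx
    have hTx : T x = 0 := hx
    have hle := h x
    rw [hTx, norm_zero] at hle
    exact norm_le_zero_iff.mp (nonpos_of_mul_nonpos_right hle hδ)
  · refine ⟨⟨δ⁻¹, by positivity⟩, T.antilipschitz_of_bound fun x => ?_⟩
    change ‖x‖ ≤ δ⁻¹ * ‖T x‖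
    rw [inv_mul_eq_div, le_div_iff₀ hδ, mul_comm]
    exact h x

lemma IsSelfAdjoint.ofReal_smul {T : H →L[ℂ] H} (hT : IsSelfAdjoint T) (μ : ℝ) :
    IsSelfAdjoint ((μ : ℂ) • T) := by
  rw [IsSelfAdjoint, star_smul, hT.star_eq, Complex.star_def, Complex.conj_ofReal]

/-- A real number `μ` for which `T - μ` is bounded below is not in the spectrum of the
self-adjoint operator `T`. -/
lemma IsSelfAdjoint.notMem_spectrum_of_bounded_below {T : H →L[ℂ] H} (hT : IsSelfAdjoint T)
    {μ δ : ℝ} (hδ : 0 < δ) (h : ∀ x, δ * ‖x‖ ≤ ‖T x - (μ : ℂ) • x‖) : μ ∉ spectrum ℝ T := by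
  rw [spectrum.notMem_iff]
  have hsa : IsSelfAdjoint (algebraMap ℝ (H →L[ℂ] H) μ) := .algebraMap _ (.all μ)
  refine (hsa.sub hT).isUnit_of_bounded_below hδ fun x => ?_
  rw [sub_apply, algebraMap_real_apply_eq_smul, norm_sub_rev]
  exact h x

lemma IsSelfAdjoint.inner_apply_comm {T : H →L[ℂ] H} (hT : IsSelfAdjoint T) (x y : H) :
    ⟪T x, y⟫_ℂ = ⟪x, T y⟫_ℂ :=
  hT.isSymmetric x y

/-- If `A - μ` is bounded below on the reducing subspace `Ran P` for every `μ > r`, then the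
quadratic form of `A` is at most `r` there. -/
lemma re_inner_le_of_bounded_below_on_range {A P : H →L[ℂ] H} (hA : IsSelfAdjoint A)
    (hP : IsSelfAdjoint P) (hPP : IsIdempotentElem P) (hAP : Commute A P) {r : ℝ}
    (h : ∀ μ > r, ∃ δ > 0, ∀ x, P x = x → δ * ‖x‖ ≤ ‖A x - (μ : ℂ) • x‖) {x : H}
    (hx : P x = x) : (⟪A x, x⟫_ℂ).re ≤ r * ‖x‖ ^ 2 := by
  set T : H →L[ℂ] H := A * P + (r : ℂ) • (1 - P) with hTdef
  have hPPx (y : H) : P (P y) = P y := DFunLike.congr_fun hPP y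
  have hAPx (y : H) : A (P y) = P (A y) := DFunLike.congr_fun hAP y
  have hT : IsSelfAdjoint T :=
    (hA.commute_iff hP |>.mp hAP).add (((IsSelfAdjoint.one _).sub hP).ofReal_smul r)
  have hTx (y : H) : T y = A (P y) + (r : ℂ) • (y - P y) := by simp [hTdef]
  have hspec : ∀ μ ∈ spectrum ℝ T, μ ≤ r := by
    intro μ hμ
    by_contra! hrμ
    obtain ⟨δ, hδ, hlow⟩ := h μ hrμ
    have hm : 0 < min δ (μ - r) := lt_min hδ (sub_pos.mpr hrμ)
    refine hT.notMem_spectrum_of_bounded_below hm (fun y => ?_) hμ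
    set p := P y with hp
    set q := y - p with hq
    have hPp : P p = p := hPPx y
    have hPq : P q = 0 := by rw [hq, map_sub, hPp, hp, sub_self]
    have hPa : P (A p - (μ : ℂ) • p) = A p - (μ : ℂ) • p := by
      rw [map_sub, map_smul, ← hAPx, hPp]
    have hortho {u v : H} (hu : P u = u) (hv : P v = 0) : ⟪u, v⟫_ℂ = 0 := by
      rw [← hu, hP.inner_apply_comm, hv, inner_zero_right]
    have hy : y = p + q := by rw [hq]; abel
    have hdec : T y - (μ : ℂ) • y = (A p - (μ : ℂ) • p) + ((r - μ : ℝ) : ℂ) • q := by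
      rw [hTx, ← hp, ← hq]
      nth_rw 1 [hy]
      push_cast
      module
    have hny : ‖y‖ * ‖y‖ = ‖p‖ * ‖p‖ + ‖q‖ * ‖q‖ := by
      conv_lhs => rw [hy]
      exact norm_add_sq_eq_norm_sq_add_norm_sq_of_inner_eq_zero _ _ (hortho hPp hPq)
    have hnT := norm_add_sq_eq_norm_sq_add_norm_sq_of_inner_eq_zero
      (A p - (μ : ℂ) • p) (((r - μ : ℝ) : ℂ) • q)
      (hortho hPa (by rw [map_smul, hPq, smul_zero]))
    rw [← hdec, norm_smul, Complex.norm_real, Real.norm_eq_abs, abs_sub_comm,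
      abs_of_pos (sub_pos.mpr hrμ)] at hnT
    have h1 : min δ (μ - r) * ‖p‖ ≤ ‖A p - (μ : ℂ) • p‖ :=
      (mul_le_mul_of_nonneg_right (min_le_left _ _) (norm_nonneg _)).trans (hlow p hPp)
    have h2 : min δ (μ - r) * ‖q‖ ≤ (μ - r) * ‖q‖ :=
      mul_le_mul_of_nonneg_right (min_le_right _ _) (norm_nonneg _)
    refine (mul_self_le_mul_self_iff (by positivity) (norm_nonneg _)).mpr ?_
    have h1' := mul_self_le_mul_self (by positivity) h1
    have h2' := mul_self_le_mul_self (by positivity) h2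
    calc _ = min δ (μ - r) * ‖p‖ * (min δ (μ - r) * ‖p‖)
          + min δ (μ - r) * ‖q‖ * (min δ (μ - r) * ‖q‖) := by
          rw [mul_mul_mul_comm, hny]; ring
      _ ≤ _ := by rw [hnT]; exact add_le_add h1' h2'
  have hle : T ≤ algebraMap ℝ (H →L[ℂ] H) r := le_algebraMap_of_spectrum_le hspec hT
  have hre := (ContinuousLinearMap.le_def _ _ |>.mp hle).re_inner_nonneg_left x
  rw [sub_apply, algebraMap_real_apply_eq_smul, hTx, hx, sub_self, smul_zero, add_zero,
    inner_sub_left, map_sub, re_inner_ofReal_smul_self] at hre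
  exact sub_nonneg.mp hre

end SelfAdjoint

namespace IsSpectralMeasure

variable {H : Type*} [NormedAddCommGroup H] [InnerProductSpace ℂ H] [CompleteSpace H]
  {T : H →L[ℂ] H} {E : Set ℝ → H →L[ℂ] H}

lemma isIdempotentElem (hE : IsSpectralMeasure T E) {Δ : Set ℝ} (hΔ : MeasurableSet Δ) :
    IsIdempotentElem (E Δ) := by
  rw [IsIdempotentElem, hE.map_inter Δ Δ hΔ hΔ, Set.inter_self]

lemma map_empty (hE : IsSpectralMeasure T E) : E ∅ = 0 := by
  ext x
  have h := hE.countably_additive (fun _ => ∅) (fun _ => .empty) (fun _ _ _ => disjoint_bot_left) x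
  simpa using tendsto_nhds_unique tendsto_const_nhds h.summable.tendsto_atTop_zero

lemma eq_zero_of_subset (hE : IsSpectralMeasure T E) {Δ Δ' : Set ℝ} (hΔ : MeasurableSet Δ)
    (hΔ' : MeasurableSet Δ') (hsub : Δ' ⊆ Δ) (h : E Δ = 0) : E Δ' = 0 := by
  rw [← Set.inter_eq_left.mpr hsub, ← hE.map_inter Δ' Δ hΔ' hΔ, h, mul_zero]

/-- The spectral measure vanishes on closed sets which do not meet the spectrum. -/
lemma eq_zero_of_isClosed_of_disjoint (hE : IsSpectralMeasure T E) (hT : IsSelfAdjoint T)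
    {K : Set ℝ} (hK : IsClosed K) (hd : Disjoint (spectrum ℝ T) K) : E K = 0 := by
  rcases K.eq_empty_or_nonempty with rfl | hne
  · exact hE.map_empty
  have hlow (μ : ℝ) : ∃ δ > 0, ∀ x, E K x = x → δ * ‖x‖ ≤ ‖T x - (μ : ℂ) • x‖ := by
    by_cases hμ : μ ∈ spectrum ℝ T
    · exact ⟨_, (hK.notMem_iff_infDist_pos hne).mp (Set.disjoint_left.mp hd hμ),
        fun x hx => hE.spectrum_loc K hK.measurableSet x hx μ⟩
    · obtain ⟨δ, hδ, h⟩ := exists_bounded_below_of_notMem_spectrum hμ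
      exact ⟨δ, hδ, fun x _ => h x⟩
  ext y
  have hx : E K (E K y) = E K y := DFunLike.congr_fun (hE.isIdempotentElem hK.measurableSet) y
  have hle := re_inner_le_of_bounded_below_on_range hT (hE.isSelfAdjoint K hK.measurableSet)
    (hE.isIdempotentElem hK.measurableSet) (hE.commutes K hK.measurableSet)
    (r := -(‖T‖ + 1)) (fun μ _ => hlow μ) hx
  set x := E K y
  have h1 : |(⟪T x, x⟫_ℂ).re| ≤ ‖T‖ * ‖x‖ * ‖x‖ :=
    ((Complex.abs_re_le_norm _).trans (norm_inner_le_norm _ _)).trans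
      (mul_le_mul_of_nonneg_right (T.le_opNorm x) (norm_nonneg _))
  have h2 := neg_le_of_abs_le h1
  have h3 : ‖x‖ ^ 2 ≤ 0 := by nlinarith
  simpa using h3.antisymm (sq_nonneg _)

/-- If the spectrum is the disjoint union of two closed sets, the corresponding spectral
projections are complementary. -/
lemma add_eq_one_of_spectrum_eq_union (hE : IsSpectralMeasure T E) (hT : IsSelfAdjoint T)
    {s t : Set ℝ} (hs : IsClosed s) (ht : IsClosed t) (hst : Disjoint s t)
    (hne : s.Nonempty) (hspec : spectrum ℝ T = s ∪ t) : E s + E t = 1 := by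
  set S := s ∪ t
  have hSc : IsClosed S := hs.union ht
  have hSne : S.Nonempty := hne.mono Set.subset_union_left
  set K : ℕ → Set ℝ := fun n => {μ | 1 / ((n : ℝ) + 1) ≤ Metric.infDist μ S}
  have hKc (n : ℕ) : IsClosed (K n) :=
    isClosed_le continuous_const (Metric.continuous_infDist_pt S)
  have hKS (n : ℕ) : Disjoint S (K n) := by
    refine Set.disjoint_left.mpr fun μ hμ hμK => ?_
    have hpos : (0 : ℝ) < 1 / ((n : ℝ) + 1) := by positivity
    have hle : 1 / ((n : ℝ) + 1) ≤ Metric.infDist μ S := hμK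
    rw [Metric.infDist_zero_of_mem hμ] at hle
    exact hpos.not_ge hle
  have hKzero (n : ℕ) : E (K n) = 0 :=
    hE.eq_zero_of_isClosed_of_disjoint hT (hKc n) (hspec ▸ hKS n)
  have hDm (n : ℕ) : MeasurableSet (disjointed K n) :=
    .disjointed (fun n => (hKc n).measurableSet) n
  have hDzero (n : ℕ) : E (disjointed K n) = 0 :=
    hE.eq_zero_of_subset (hKc n).measurableSet (hDm n) (disjointed_le K n) (hKzero n)
  have hDS (n : ℕ) : Disjoint S (disjointed K n) := (hKS n).mono_right (disjointed_le K n)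
  have hDs (n : ℕ) : Disjoint s (disjointed K n) := (hDS n).mono_left Set.subset_union_left
  have hDt (n : ℕ) : Disjoint t (disjointed K n) := (hDS n).mono_left Set.subset_union_right
  have hcover : (⋃ n, K n) = Sᶜ := by
    ext μ
    refine ⟨fun hμ hμS => ?_, fun hμ => ?_⟩
    · obtain ⟨n, hn⟩ := Set.mem_iUnion.mp hμ
      exact Set.disjoint_left.mp (hKS n) hμS hn
    · obtain ⟨n, hn⟩ := exists_nat_one_div_lt ((hSc.notMem_iff_infDist_pos hSne).mp hμ)
      exact Set.mem_iUnion.mpr ⟨n, hn.le⟩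
  let F : ℕ → Set ℝ := fun n => Nat.casesOn n s fun m => Nat.casesOn m t (disjointed K)
  have hFm (n : ℕ) : MeasurableSet (F n) := by
    rcases n with _ | _ | n
    exacts [hs.measurableSet, ht.measurableSet, hDm n]
  have hFd : Pairwise (Function.onFun Disjoint F) := by
    intro i j hij
    rcases i with _ | _ | i <;> rcases j with _ | _ | j
    · exact absurd rfl hij
    · exact hst
    · exact hDs j
    · exact hst.symm
    · exact absurd rfl hij
    · exact hDt j
    · exact (hDs i).symm
    · exact (hDt i).symm
    · exact disjoint_disjointed K fun h => hij (by rw [h])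
  have hFu : (⋃ n, F n) = Set.univ := by
    refine Set.eq_univ_of_forall fun μ => Set.mem_iUnion.mpr ?_
    by_cases hμ : μ ∈ S
    · rcases hμ with h | h
      exacts [⟨0, h⟩, ⟨1, h⟩]
    · have hmem : μ ∈ ⋃ n, disjointed K n := by rwa [iUnion_disjointed, hcover]
      obtain ⟨n, hn⟩ := Set.mem_iUnion.mp hmem
      exact ⟨n + 2, hn⟩
  ext x
  have hsum := hE.countably_additive F hFm hFd x
  rw [hFu, hE.map_univ] at hsum
  have hfin : HasSum (fun n => E (F n) x) (∑ n ∈ Finset.range 2, E (F n) x) := by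
    refine hasSum_sum_of_ne_finset_zero fun n hn => ?_
    obtain ⟨m, rfl⟩ := Nat.exists_eq_add_of_le' (not_lt.mp (Finset.mem_range.not.mp hn))
    change E (disjointed K m) x = 0
    rw [hDzero, zero_apply]
  have h := hfin.unique hsum
  rwa [Finset.sum_range_succ, Finset.sum_range_one] at h

/-- Vectors in the spectral subspace of `Δ` have quadratic form bounded above by any upper bound
of `Δ`. -/
lemma re_inner_le (hE : IsSpectralMeasure T E) (hT : IsSelfAdjoint T) {Δ : Set ℝ}
    (hΔ : IsClosed Δ) (hne : Δ.Nonempty) {r : ℝ} (hr : ∀ μ ∈ Δ, μ ≤ r) {x : H}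
    (hx : E Δ x = x) : (⟪T x, x⟫_ℂ).re ≤ r * ‖x‖ ^ 2 :=
  re_inner_le_of_bounded_below_on_range hT (hE.isSelfAdjoint Δ hΔ.measurableSet)
    (hE.isIdempotentElem hΔ.measurableSet) (hE.commutes Δ hΔ.measurableSet)
    (fun μ hμ => ⟨_, (hΔ.notMem_iff_infDist_pos hne).mp fun h => (hr μ h).not_gt hμ,
      fun y hy => hE.spectrum_loc Δ hΔ.measurableSet y hy μ⟩) hx

/-- Vectors in the spectral subspace of `Δ` have quadratic form bounded below by any lower bound
of `Δ`. -/
lemma le_re_inner (hE : IsSpectralMeasure T E) (hT : IsSelfAdjoint T) {Δ : Set ℝ}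
    (hΔ : IsClosed Δ) (hne : Δ.Nonempty) {r : ℝ} (hr : ∀ μ ∈ Δ, r ≤ μ) {x : H}
    (hx : E Δ x = x) : r * ‖x‖ ^ 2 ≤ (⟪T x, x⟫_ℂ).re := by
  have h := re_inner_le_of_bounded_below_on_range (r := -r) hT.neg
    (hE.isSelfAdjoint Δ hΔ.measurableSet) (hE.isIdempotentElem hΔ.measurableSet)
    (hE.commutes Δ hΔ.measurableSet).neg_left
    (fun μ hμ => ⟨_, (hΔ.notMem_iff_infDist_pos (x := -μ) hne).mp fun h => by
        linarith [hr _ h],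
      fun y hy => by
        have hloc := hE.spectrum_loc Δ hΔ.measurableSet y hy (-μ)
        rwa [← norm_neg (T y - _), show -(T y - ((-μ : ℝ) : ℂ) • y) = (-T) y - (μ : ℂ) • y by
          rw [neg_apply]; push_cast; module] at hloc⟩) hx
  rw [neg_apply, inner_neg_left, Complex.neg_re] at h
  linarith

end IsSpectralMeasure

/-- **Theorem C (i).** If the isolated parts `σ` and `Σ` of the spectrum of `A` are
subordinated, `sup σ < inf Σ`, and the perturbation `V` is off-diagonal, then the spectrum
of `B = A + V` does not intersect the open interval `(sup σ, inf Σ)`. -/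
theorem gap_survives_subordinated_case
    {H : Type*} [NormedAddCommGroup H] [InnerProductSpace ℂ H] [CompleteSpace H]
    [TopologicalSpace.SeparableSpace H]
    (A V B : H →L[ℂ] H) (hA : IsSelfAdjoint A) (hV : IsSelfAdjoint V) (hB : B = A + V)
    (σ Sig : Set ℝ) (hσc : IsClosed σ) (hSigc : IsClosed Sig) (hdisj : Disjoint σ Sig)
    (hspec : spectrum ℝ A = σ ∪ Sig)
    (d : ℝ) (hd : d = sInf (Set.image2 dist σ Sig)) (hd0 : 0 < d)
    (EA : Set ℝ → H →L[ℂ] H) (hEA : IsSpectralMeasure A EA)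
    (hoff₁ : EA σ * V * EA σ = 0) (hoff₂ : EA Sig * V * EA Sig = 0)
    (hsub : sSup σ < sInf Sig) :
    ∀ x ∈ Set.Ioo (sSup σ) (sInf Sig), x ∉ spectrum ℝ B := by
  rintro c ⟨hac, hcb⟩
  have hne : (Set.image2 dist σ Sig).Nonempty := by
    by_contra h
    rw [Set.not_nonempty_iff_eq_empty.mp h, Real.sInf_empty] at hd
    exact hd0.ne' hd
  obtain ⟨hσne, hSigne⟩ := Set.image2_nonempty_iff.mp hne
  have hcomp : IsCompact (spectrum ℝ A) := spectrum.isCompact A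
  have hσb : BddAbove σ := hcomp.bddAbove.mono (hspec ▸ Set.subset_union_left)
  have hSigb : BddBelow Sig := hcomp.bddBelow.mono (hspec ▸ Set.subset_union_right)
  have hPQ : EA σ + EA Sig = 1 :=
    hEA.add_eq_one_of_spectrum_eq_union hA hσc hSigc hdisj hσne hspec
  have hP := hEA.isSelfAdjoint σ hσc.measurableSet
  have hQ := hEA.isSelfAdjoint Sig hSigc.measurableSet
  have hBsa : IsSelfAdjoint B := hB ▸ hA.add hV
  have hδ : 0 < min (c - sSup σ) (sInf Sig - c) := lt_min (sub_pos.mpr hac) (sub_pos.mpr hcb)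
  refine hBsa.notMem_spectrum_of_bounded_below hδ fun u => ?_
  set p := EA σ u with hp
  set q := EA Sig u with hq
  have hPp : EA σ p = p := DFunLike.congr_fun (hEA.isIdempotentElem hσc.measurableSet) u
  have hQq : EA Sig q = q := DFunLike.congr_fun (hEA.isIdempotentElem hSigc.measurableSet) u
  have hu : u = p + q := DFunLike.congr_fun hPQ.symm u
  have hPQ0 : EA σ * EA Sig = 0 := by
    rw [hEA.map_inter _ _ hσc.measurableSet hSigc.measurableSet, hdisj.inter_eq, hEA.map_empty]
  have hPq : EA σ q = 0 := DFunLike.congr_fun hPQ0 u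
  have hortho : ⟪p, q⟫_ℂ = 0 := by
    rw [← hPp, hP.inner_apply_comm, hPq, inner_zero_right]
  have hortho' : ⟪q, p⟫_ℂ = 0 := by rw [← inner_conj_symm, hortho, map_zero]
  have hApq : ⟪A p, q⟫_ℂ = 0 := by
    have hcomm : A (EA σ p) = EA σ (A p) := DFunLike.congr_fun (hEA.commutes σ hσc.measurableSet) p
    rw [← hPp, hcomm, hP.inner_apply_comm, hPq, inner_zero_right]
  have hAqp : ⟪A q, p⟫_ℂ = 0 := by
    rw [hA.inner_apply_comm, ← inner_conj_symm, hApq, map_zero]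
  have hVpp : ⟪V p, p⟫_ℂ = 0 := by
    have h0 : EA σ (V (EA σ u)) = 0 := DFunLike.congr_fun hoff₁ u
    nth_rw 2 [← hPp]
    rw [← hP.inner_apply_comm, hp, h0, inner_zero_left]
  have hVqq : ⟪V q, q⟫_ℂ = 0 := by
    have h0 : EA Sig (V (EA Sig u)) = 0 := DFunLike.congr_fun hoff₂ u
    nth_rw 2 [← hQq]
    rw [← hQ.inner_apply_comm, hq, h0, inner_zero_left]
  have hVpq : (⟪V p, q⟫_ℂ).re = (⟪V q, p⟫_ℂ).re := by
    rw [hV.inner_apply_comm, ← inner_conj_symm, Complex.conj_re]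
  have hformp := hEA.re_inner_le hA hσc hσne (fun μ hμ => le_csSup hσb hμ) hPp
  have hformq := hEA.le_re_inner hA hSigc hSigne (fun μ hμ => csInf_le hSigb hμ) hQq
  have hnu : ‖u‖ * ‖u‖ = ‖p‖ * ‖p‖ + ‖q‖ * ‖q‖ := by
    conv_lhs => rw [hu]
    exact norm_add_sq_eq_norm_sq_add_norm_sq_of_inner_eq_zero _ _ hortho
  have hnJ : ‖q - p‖ = ‖u‖ := by
    rw [norm_sub_eq_norm_add hortho, add_comm, ← hu]
  have hform : (⟪B u - (c : ℂ) • u, q - p⟫_ℂ).re =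
      ((⟪A q, q⟫_ℂ).re - c * ‖q‖ ^ 2) + (c * ‖p‖ ^ 2 - (⟪A p, p⟫_ℂ).re) := by
    have hself (v : H) : (⟪(c : ℂ) • v, v⟫_ℂ).re = c * ‖v‖ ^ 2 :=
      re_inner_ofReal_smul_self c v
    have hcpq : ⟪(c : ℂ) • p, q⟫_ℂ = 0 := by rw [inner_smul_left, hortho, mul_zero]
    have hcqp : ⟪(c : ℂ) • q, p⟫_ℂ = 0 := by rw [inner_smul_left, hortho', mul_zero]
    rw [hB, hu]
    simp only [add_apply, map_add, smul_add, inner_sub_left, inner_sub_right,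
      inner_add_left, Complex.add_re, Complex.sub_re, hself, hcpq, hcqp, hApq, hAqp, hVpp, hVqq,
      hVpq, Complex.zero_re]
    ring
  have hupper : (⟪B u - (c : ℂ) • u, q - p⟫_ℂ).re ≤ ‖B u - (c : ℂ) • u‖ * ‖u‖ := by
    rw [← hnJ]
    exact (Complex.re_le_norm _).trans (norm_inner_le_norm _ _)
  have hmp := mul_le_mul_of_nonneg_right
    (min_le_left (c - sSup σ) (sInf Sig - c)) (sq_nonneg ‖p‖)
  have hmq := mul_le_mul_of_nonneg_right
    (min_le_right (c - sSup σ) (sInf Sig - c)) (sq_nonneg ‖q‖)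
  rcases (norm_nonneg u).eq_or_lt with h0 | hpos
  · rw [← h0, mul_zero]
    exact norm_nonneg _
  · refine le_of_mul_le_mul_right ?_ hpos
    calc min (c - sSup σ) (sInf Sig - c) * ‖u‖ * ‖u‖
        = min (c - sSup σ) (sInf Sig - c) * ‖p‖ ^ 2
          + min (c - sSup σ) (sInf Sig - c) * ‖q‖ ^ 2 := by rw [mul_assoc, hnu]; ring
      _ ≤ (⟪B u - (c : ℂ) • u, q - p⟫_ℂ).re := by rw [hform]; linarith
      _ ≤ _ := hupper
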